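/- arXiv:1001.4954 — 2 statements merged into one kernel-verified Lean document; each statement's English description precedes it below -/
import Mathlib

section
/- Let n ≥ 3 be an integer, let c be an integer with 1 ≤ c ≤ n − 1, let i ≥ 1, and let (a,b) = (1,c)·(Φ⁻¹)^i, where Φ⁻¹ = [[−1, −n], [n, n²−1]] acts on row vectors on the right. If r, s are positive integers with r + s = a + b and a·r + b·s − n·a·s ≤ 0, then s ≥ b. -/
/-- Right action of the inverse Coxeter matrix `Φ⁻¹ = [[−1, −n], [n, n²−1]]`
of the `n`-Kronecker quiver on an integer row vector:
`(x,y)·Φ⁻¹ = (n·y − x, (n²−1)·y − n·x)`. -/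
def phiInv (n : ℤ) (p : ℤ × ℤ) : ℤ × ℤ :=
  (n * p.2 - p.1, (n ^ 2 - 1) * p.2 - n * p.1)

/-- The inverse Coxeter transformation preserves the Tits form `x² + y² − n·x·y`. -/
theorem titsForm_phiInv (n : ℤ) (p : ℤ × ℤ) :
    (phiInv n p).1 ^ 2 + (phiInv n p).2 ^ 2 - n * (phiInv n p).1 * (phiInv n p).2 =
      p.1 ^ 2 + p.2 ^ 2 - n * p.1 * p.2 := by
  simp only [phiInv]
  ring

/-- Invariants of the vectors `(1,c)·(Φ⁻¹)^(j+1)`: the value of the Tits form, and bounds on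
the coordinates. -/
theorem phiInv_iterate_succ_invariants (n c : ℤ) (hn : 3 ≤ n) (hc : 1 ≤ c) (j : ℕ) :
    let p := (phiInv n)^[j + 1] (1, c)
    p.1 ^ 2 + p.2 ^ 2 - n * p.1 * p.2 = 1 + c ^ 2 - n * c ∧
      n * c - 1 ≤ p.1 ∧ p.1 ≤ p.2 ∧ p.2 ≤ n * p.1 := by
  induction j with
  | zero =>
    refine ⟨?_, ?_, ?_, ?_⟩ <;> simp only [zero_add, Function.iterate_one, phiInv]
    · ring
    · rfl
    · nlinarith [mul_nonneg (sub_nonneg.2 hc) (by nlinarith : 0 ≤ n ^ 2 - n - 1)]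
    · nlinarith
  | succ j ih =>
    rw [Function.iterate_succ_apply']
    generalize (phiInv n)^[j + 1] (1, c) = p at ih ⊢
    obtain ⟨hq, ha, hle, -⟩ := ih
    have hpos : 0 ≤ p.1 := by nlinarith
    refine ⟨(titsForm_phiInv n p).trans hq, ?_, ?_, ?_⟩ <;> simp only [phiInv]
    · nlinarith
    · nlinarith [mul_nonneg (hpos.trans hle) (by nlinarith : 0 ≤ n ^ 2 - 2 * n),
        mul_nonneg (sub_nonneg.2 hle) (by linarith : 0 ≤ n - 1)]
    · nlinarith

/-- For `n ≥ 3`, `1 ≤ c ≤ n−1`, `i ≥ 1` and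
`(a,b) = (1,c)·(Φ⁻¹)^i`: if `r, s` are positive integers with `r + s = a + b`
and `a·r + b·s − n·a·s ≤ 0`, then `s ≥ b`. -/
theorem stmt4 (n c : ℤ) (hn : 3 ≤ n) (hc1 : 1 ≤ c) (hc2 : c ≤ n - 1)
    (i : ℕ) (hi : 1 ≤ i) (a b : ℤ) (hab : (a, b) = (phiInv n)^[i] (1, c))
    (r s : ℤ) (hr : 0 < r) (hs : 0 < s) (hsum : r + s = a + b)
    (heuler : a * r + b * s - n * a * s ≤ 0) :
    b ≤ s := by
  obtain ⟨j, rfl⟩ : ∃ j, i = j + 1 := ⟨i - 1, by omega⟩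
  have hinv := phiInv_iterate_succ_invariants n c hn hc1 j
  rw [← hab] at hinv
  obtain ⟨hq, ha, -, hba⟩ := hinv
  dsimp only at hq ha hba
  by_contra! hlt
  obtain rfl : r = a + b - s := by linarith
  have ht : (b - s) * ((n + 1) * a - b) ≤ n * c - c ^ 2 - 1 := by linarith
  nlinarith [mul_nonneg (by omega : 0 ≤ b - s - 1)
    (by nlinarith : 0 ≤ (n + 1) * a - b)]
end

section
/- Let Φ = [[8, 3], [−3, −1]] and Φ⁻¹ = [[−1, −3], [3, 8]], acting on integer row vectors on the right. Then for every positive integer m and every integer i ≥ 0: (m, 2m)·Φ^{i+1} = (m·F_{4i+3}, m·F_{4i+1}) and (m, 2m)·(Φ⁻¹)^i = (m·F_{4i+1}, m·F_{4i+3}), where F_k denotes the k-th Fibonacci number. -/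
/-- Right action of the Coxeter matrix `Φ = [[8, 3], [−3, −1]]` of the
`3`-Kronecker quiver on an integer row vector: `(x,y)·Φ = (8x − 3y, 3x − y)`. -/
def phi3 (p : ℤ × ℤ) : ℤ × ℤ :=
  (8 * p.1 - 3 * p.2, 3 * p.1 - p.2)

/-- Right action of the inverse Coxeter matrix `Φ⁻¹ = [[−1, −3], [3, 8]]` of
the `3`-Kronecker quiver on an integer row vector:
`(x,y)·Φ⁻¹ = (3y − x, 8y − 3x)`. -/
def phiInv3 (p : ℤ × ℤ) : ℤ × ℤ :=
  (3 * p.2 - p.1, 8 * p.2 - 3 * p.1)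

/-- The Fibonacci recurrence with step two. -/
theorem fib_add_four_eq (n : ℕ) :
    (Nat.fib (n + 4) : ℤ) = 3 * Nat.fib (n + 2) - Nat.fib n := by
  have h₂ := Nat.fib_add_two (n := n)
  have h₃ := Nat.fib_add_two (n := n + 1)
  have h₄ := Nat.fib_add_two (n := n + 2)
  simp only [add_assoc, Nat.reduceAdd] at h₂ h₃ h₄
  lia

theorem phiInv3_mul_fib (m : ℤ) (n : ℕ) :
    phiInv3 (m * Nat.fib n, m * Nat.fib (n + 2)) =
      (m * Nat.fib (n + 4), m * Nat.fib (n + 6)) := by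
  have h := fib_add_four_eq (n + 2)
  simp only [add_assoc, Nat.reduceAdd] at h
  rw [phiInv3, h, fib_add_four_eq n]
  ext <;> dsimp only <;> ring

theorem phi3_swap (p : ℤ × ℤ) : phi3 p.swap = (phiInv3 p).swap := rfl

/-- For every positive integer `m` and every `i ≥ 0`,
`(m,2m)·Φ^{i+1} = (m·F_{4i+3}, m·F_{4i+1})` and
`(m,2m)·(Φ⁻¹)^i = (m·F_{4i+1}, m·F_{4i+3})`. -/
theorem stmt10 (m : ℤ) (hm : 0 < m) (i : ℕ) :
    phi3^[i + 1] (m, 2 * m) =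
      (m * (Nat.fib (4 * i + 3) : ℤ), m * (Nat.fib (4 * i + 1) : ℤ)) ∧
    phiInv3^[i] (m, 2 * m) =
      (m * (Nat.fib (4 * i + 1) : ℤ), m * (Nat.fib (4 * i + 3) : ℤ)) := by
  have inv_iterate : ∀ k : ℕ, phiInv3^[k] (m, 2 * m) =
      (m * (Nat.fib (4 * k + 1) : ℤ), m * (Nat.fib (4 * k + 3) : ℤ)) := by
    intro k
    induction k with
    | zero => simp [Nat.fib_add_two, mul_comm]
    | succ k ih =>
      rw [Function.iterate_succ_apply', ih]
      exact phiInv3_mul_fib m (4 * k + 1)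
  refine ⟨?_, inv_iterate i⟩
  have phi_start : phi3 (m, 2 * m) = (m, 2 * m).swap := by
    ext <;> simp only [phi3, Prod.swap] <;> ring
  have swap_semiconj : Function.Semiconj Prod.swap phiInv3 phi3 := fun p => (phi3_swap p).symm
  rw [Function.iterate_succ_apply, phi_start, ← (swap_semiconj.iterate_right i).eq, inv_iterate i,
    Prod.swap_prod_mk]
end
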